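/- Let p = 3 and consider vectors in (Z/3Z)^6. Let D = [[1,1,0],[1,0,1],[0,1,1]], D_1 = [[2,0,0],[0,0,2],[0,2,0]] and D_2 = [[1,0,1],[0,1,1],[1,1,0]] (all 3 × 3 matrices with rows and columns indexed by 0,1,2). Then there do not exist balanced vectors b_1, b_2, b_3 ∈ (Z/3Z)^6 whose pairwise differences are balanced, such that the pair (b_1,b_2) raises D, the pair (b_1,b_3) raises D_1, and the pair (b_2,b_3) raises D_2. -/

import Mathlib

/-- A vector `v ∈ (ℤ/pℤ)^{mp}` is balanced if every element of `ℤ/pℤ` appears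
exactly `m` times as a component of `v`. -/
def BalancedVec (p m : ℕ) (v : Fin (m * p) → ZMod p) : Prop :=
  ∀ a : ZMod p, (Finset.univ.filter fun k => v k = a).card = m

/-- The matrix raised by the pair `(v, w)`: `X i j = #{k : v k = i, w k = j}`. -/
def raisedMatrix (p m : ℕ) (v w : Fin (m * p) → ZMod p) :
    Matrix (ZMod p) (ZMod p) ℕ :=
  fun i j => (Finset.univ.filter fun k => v k = i ∧ w k = j).card

/-- With `D = [[1,1,0],[1,0,1],[0,1,1]]`, `D₁ = [[2,0,0],[0,0,2],[0,2,0]]` and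
`D₂ = [[1,0,1],[0,1,1],[1,1,0]]`, there are no balanced vectors
`b₁, b₂, b₃ ∈ (ℤ/3ℤ)^6` with pairwise balanced differences such that `(b₁,b₂)`
raises `D`, `(b₁,b₃)` raises `D₁`, and `(b₂,b₃)` raises `D₂`. -/
theorem no_triple_raising_example :
    ¬ ∃ b₁ b₂ b₃ : Fin (2 * 3) → ZMod 3,
      BalancedVec 3 2 b₁ ∧ BalancedVec 3 2 b₂ ∧ BalancedVec 3 2 b₃ ∧
      BalancedVec 3 2 (b₁ - b₂) ∧ BalancedVec 3 2 (b₁ - b₃) ∧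
      BalancedVec 3 2 (b₂ - b₃) ∧
      raisedMatrix 3 2 b₁ b₂ = !![1, 1, 0; 1, 0, 1; 0, 1, 1] ∧
      raisedMatrix 3 2 b₁ b₃ = !![2, 0, 0; 0, 0, 2; 0, 2, 0] ∧
      raisedMatrix 3 2 b₂ b₃ = !![1, 0, 1; 0, 1, 1; 1, 1, 0] := by
  rintro ⟨b₁, b₂, b₃, -, -, -, -, -, -, hD, hD₁, hD₂⟩
  -- `D 0 1 = 1` gives a coordinate `k` with `b₁ k = 0` and `b₂ k = 1`. Row `0` of `D₁` is
  -- `(2, 0, 0)`, so `b₃ k = 0`, which contradicts `D₂ 1 0 = 0`.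
  have h01 : (Finset.univ.filter fun k => b₁ k = 0 ∧ b₂ k = 1).card = 1 :=
    congrFun (congrFun hD 0) 1
  have h11 : (Finset.univ.filter fun k => b₁ k = 0 ∧ b₃ k = 1).card = 0 :=
    congrFun (congrFun hD₁ 0) 1
  have h12 : (Finset.univ.filter fun k => b₁ k = 0 ∧ b₃ k = 2).card = 0 :=
    congrFun (congrFun hD₁ 0) 2
  have h20 : (Finset.univ.filter fun k => b₂ k = 1 ∧ b₃ k = 0).card = 0 :=
    congrFun (congrFun hD₂ 1) 0
  obtain ⟨k, hk⟩ := Finset.card_pos.mp (h01 ▸ Nat.one_pos)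
  obtain ⟨h1, h2⟩ := (Finset.mem_filter.mp hk).2
  rw [Finset.card_eq_zero, Finset.filter_eq_empty_iff] at h11 h12 h20
  have h3 : ∀ x : ZMod 3, x = 0 ∨ x = 1 ∨ x = 2 := by decide
  rcases h3 (b₃ k) with h | h | h
  · exact h20 (Finset.mem_univ k) ⟨h2, h⟩
  · exact h11 (Finset.mem_univ k) ⟨h1, h⟩
  · exact h12 (Finset.mem_univ k) ⟨h1, h⟩
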